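/- The divided difference satisfies the Hermite integral representation: for a function f that is n times continuously differentiable on ℝ and any points x_0,...,x_n ∈ ℝ, f[x_0,...,x_n] = ∫_{Δ_n} f^{(n)}(s_0 x_0 + s_1 x_1 + ⋯ + s_n x_n) d^n s, where Δ_n is the standard n-simplex {s_i ≥ 0, ∑ s_i = 1}. -/

import Mathlib

open MeasureTheory

/-- The divided difference, defined recursively (for distinct points). -/
noncomputable def divDiffRec (f : ℝ → ℝ) : (n : ℕ) → (Fin (n + 1) → ℝ) → ℝ
  | 0, x => f (x 0)
  | n + 1, x =>
      (divDiffRec f n (fun i => x i.succ) - divDiffRec f n (fun i => x i.castSucc)) /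
        (x (Fin.last (n + 1)) - x 0)

/-!
In Lagrange form the divided difference is symmetric in its nodes, so it satisfies the recursion
`(x p - x q) f[x] = f[x without x q] - f[x without x p]` for every pair of nodes `x p`, `x q`.
The Hermite integral is not visibly symmetric, but integrating out the direction of the edge from
vertex `0` to vertex `1` of the simplex, by the fundamental theorem of calculus, gives it the same
recursion for the pair `x 1`, `x 0`. That single instance determines both sides by induction on the
number of nodes.
-/

open Finset Lagrange Set

section DividedDifference

variable {F M ι κ : Type*} [Field F] [DecidableEq ι] [DecidableEq κ]

section NodalWeight

variable {s : Finset ι} {v : ι → F} {i j : ι}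

theorem sub_mul_nodalWeight (hv : InjOn v s) (hi : i ∈ s) (hj : j ∈ s) (hij : i ≠ j) :
    (v i - v j) * nodalWeight s v i = nodalWeight (s.erase j) v i := by
  have hne : v i - v j ≠ 0 := sub_ne_zero.2 (hv.ne hi hj hij)
  rw [nodalWeight, nodalWeight, ← mul_prod_erase _ _ (mem_erase.2 ⟨hij.symm, hj⟩),
    mul_inv_cancel_left₀ hne, erase_right_comm]

theorem nodalWeight_map (e : κ ↪ ι) (s : Finset κ) (v : ι → F) (k : κ) :
    nodalWeight (s.map e) v (e k) = nodalWeight s (v ∘ e) k := by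
  simp only [nodalWeight, ← map_erase, prod_map, Function.comp_apply]

end NodalWeight

variable [AddCommGroup M] [Module F M] {s : Finset ι} {v : ι → F} {i j : ι}

/-- The divided difference of `f` at the nodes `v i`, `i ∈ s`, in Lagrange form. It is meaningful
for `v` injective on `s`; otherwise the nodal weights take junk values. -/
def dividedDifference (s : Finset ι) (v : ι → F) (f : F → M) : M :=
  ∑ i ∈ s, nodalWeight s v i • f (v i)

theorem dividedDifference_erase (hv : InjOn v s) (hj : j ∈ s) (f : F → M) :
    dividedDifference (s.erase j) v f =
      ∑ i ∈ s, ((v i - v j) * nodalWeight s v i) • f (v i) := by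
  rw [← add_sum_erase s _ hj, sub_self, zero_mul, zero_smul, zero_add, dividedDifference]
  refine sum_congr rfl fun i hi => ?_
  rw [sub_mul_nodalWeight hv (mem_of_mem_erase hi) hj (ne_of_mem_erase hi)]

theorem sub_smul_dividedDifference (hv : InjOn v s) (hi : i ∈ s) (hj : j ∈ s) (f : F → M) :
    (v i - v j) • dividedDifference s v f =
      dividedDifference (s.erase j) v f - dividedDifference (s.erase i) v f := by
  rw [dividedDifference_erase hv hi, dividedDifference_erase hv hj, ← sum_sub_distrib,
    dividedDifference, smul_sum]
  refine sum_congr rfl fun k _ => ?_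
  rw [smul_smul, ← sub_smul, ← sub_mul, sub_sub_sub_cancel_left]

theorem dividedDifference_map (e : κ ↪ ι) (s : Finset κ) (v : ι → F) (f : F → M) :
    dividedDifference (s.map e) v f = dividedDifference s (v ∘ e) f := by
  simp only [dividedDifference, sum_map, nodalWeight_map, Function.comp_apply]

theorem dividedDifference_removeNth {n : ℕ} (p : Fin (n + 1)) (x : Fin (n + 1) → F) (f : F → M) :
    dividedDifference univ (p.removeNth x) f = dividedDifference (univ.erase p) x f := by
  rw [Fin.univ_succAbove n p, erase_cons, dividedDifference_map]
  rfl

theorem sub_smul_dividedDifference_univ {n : ℕ} {x : Fin (n + 1) → F} (hx : x.Injective)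
    (p q : Fin (n + 1)) (f : F → M) :
    (x p - x q) • dividedDifference univ x f =
      dividedDifference univ (q.removeNth x) f - dividedDifference univ (p.removeNth x) f := by
  rw [dividedDifference_removeNth, dividedDifference_removeNth,
    sub_smul_dividedDifference hx.injOn (mem_univ p) (mem_univ q)]

theorem dividedDifference_fin_one (x : Fin 1 → F) (f : F → M) :
    dividedDifference univ x f = f (x 0) := by
  simp [dividedDifference, nodalWeight]

end DividedDifference

theorem injective_removeNth {α : Type*} {n : ℕ} {x : Fin (n + 1) → α} (hx : x.Injective)
    (p : Fin (n + 1)) : Function.Injective (p.removeNth x) :=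
  hx.comp p.succAbove_right_injective

theorem divDiffRec_eq_dividedDifference (f : ℝ → ℝ) {n : ℕ} {x : Fin (n + 1) → ℝ}
    (hx : x.Injective) : divDiffRec f n x = dividedDifference univ x f := by
  induction n with
  | zero => rw [divDiffRec, dividedDifference_fin_one]
  | succ n ih =>
    have hne : x (Fin.last (n + 1)) - x 0 ≠ 0 := sub_ne_zero.2 (hx.ne Fin.last_pos.ne')
    have hrec := sub_smul_dividedDifference_univ hx (Fin.last (n + 1)) 0 f
    rw [← ih (injective_removeNth hx _), ← ih (injective_removeNth hx _), Fin.removeNth_zero,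
      Fin.removeNth_last, smul_eq_mul, mul_comm] at hrec
    exact (eq_div_of_mul_eq hne hrec).symm

section CornerSimplex

variable {ι : Type*} [Fintype ι]

/-- The simplex with vertices `0` and the standard basis vectors: the standard simplex with one
barycentric coordinate left out, which makes it a full-dimensional set. -/
def cornerSimplex (ι : Type*) [Fintype ι] : Set (ι → ℝ) :=
  {s | (∀ i, 0 ≤ s i) ∧ ∑ i, s i ≤ 1}

theorem isClosed_cornerSimplex : IsClosed (cornerSimplex ι) :=
  isClosed_Ici.inter (isClosed_le (by fun_prop : Continuous fun s : ι → ℝ => ∑ i, s i)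
    continuous_const)

theorem isCompact_cornerSimplex : IsCompact (cornerSimplex ι) :=
  isCompact_Icc.of_isClosed_subset isClosed_cornerSimplex fun _ hs =>
    ⟨hs.1, fun i => (single_le_sum (fun j _ => hs.1 j) (mem_univ i)).trans hs.2⟩

theorem cons_mem_cornerSimplex {n : ℕ} {t : ℝ} {s : Fin n → ℝ} :
    Fin.cons t s ∈ cornerSimplex (Fin (n + 1)) ↔
      s ∈ cornerSimplex (Fin n) ∧ t ∈ Icc 0 (1 - ∑ i, s i) := by
  simp only [cornerSimplex, mem_ofPred_eq, Fin.forall_fin_succ, Fin.sum_univ_succ, Fin.cons_zero,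
    Fin.cons_succ, Set.mem_Icc]
  constructor
  · rintro ⟨⟨ht, hs⟩, hsum⟩
    exact ⟨⟨hs, by linarith⟩, ht, by linarith⟩
  · rintro ⟨⟨hs, -⟩, ht, htop⟩
    exact ⟨⟨ht, hs⟩, by linarith⟩

variable {E : Type*} [NormedAddCommGroup E]

theorem indicator_cornerSimplex_cons {n : ℕ} (g : (Fin (n + 1) → ℝ) → E) (t : ℝ)
    (s : Fin n → ℝ) :
    (cornerSimplex (Fin (n + 1))).indicator g (Fin.cons t s) =
      (cornerSimplex (Fin n)).indicator
        (fun s => (Icc 0 (1 - ∑ i, s i)).indicator (fun t => g (Fin.cons t s)) t) s := by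
  classical simp only [indicator_apply, cons_mem_cornerSimplex, ite_and]

variable [NormedSpace ℝ E]

theorem integral_fin_succ {n : ℕ} {g : (Fin (n + 1) → ℝ) → E} (hg : Integrable g) :
    ∫ s, g s = ∫ s : Fin n → ℝ, ∫ t : ℝ, g (Fin.cons t s) := by
  have hmp := (volume_preserving_piFinSuccAbove (fun _ : Fin (n + 1) => ℝ) 0).symm
  have hcons : ∀ z : ℝ × (Fin n → ℝ),
      (MeasurableEquiv.piFinSuccAbove (fun _ : Fin (n + 1) => ℝ) 0).symm z =
        Fin.cons z.1 z.2 := fun z => Fin.insertNth_zero' z.1 z.2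
  have hint := hmp.integrable_comp_of_integrable hg
  rw [← hmp.integral_comp' g]
  simp only [Function.comp_def, hcons, Measure.volume_eq_prod] at hint ⊢
  exact integral_prod_symm _ hint

theorem setIntegral_cornerSimplex_succ {n : ℕ} {g : (Fin (n + 1) → ℝ) → E}
    (hg : IntegrableOn g (cornerSimplex (Fin (n + 1)))) :
    ∫ s in cornerSimplex (Fin (n + 1)), g s =
      ∫ s in cornerSimplex (Fin n), ∫ t in (0 : ℝ)..(1 - ∑ i, s i), g (Fin.cons t s) := by
  have hmeas (m : ℕ) : MeasurableSet (cornerSimplex (Fin m)) :=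
    isClosed_cornerSimplex.measurableSet
  rw [← integral_indicator (hmeas _), integral_fin_succ (hg.integrable_indicator (hmeas _)),
    ← integral_indicator (hmeas _)]
  congr 1 with s
  simp only [indicator_cornerSimplex_cons]
  by_cases hs : s ∈ cornerSimplex (Fin n)
  · simp only [indicator_of_mem hs]
    rw [integral_indicator measurableSet_Icc, integral_Icc_eq_integral_Ioc,
      intervalIntegral.integral_of_le (sub_nonneg.2 hs.2)]
  · simp only [indicator_of_notMem hs, integral_zero]

end CornerSimplex

section HermiteIntegral

variable {n : ℕ}

/-- The affine combination of the nodes `x` whose barycentric coordinates are `1 - ∑ i, s i` at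
`x 0` and `s i` at `x i.succ`. -/
def simplexPoint (x : Fin (n + 1) → ℝ) (s : Fin n → ℝ) : ℝ :=
  (1 - ∑ i, s i) * x 0 + ∑ i : Fin n, s i * x i.succ

theorem continuous_simplexPoint (x : Fin (n + 1) → ℝ) : Continuous (simplexPoint x) := by
  unfold simplexPoint
  fun_prop

theorem simplexPoint_cons (x : Fin (n + 2) → ℝ) (t : ℝ) (s : Fin n → ℝ) :
    simplexPoint x (Fin.cons t s) =
      (x 1 - x 0) * t + simplexPoint (Fin.removeNth 1 x) s := by
  simp only [simplexPoint, Fin.removeNth_apply, Fin.one_succAbove_zero, Fin.one_succAbove_succ,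
    Fin.sum_univ_succ (n := n), Fin.cons_zero, Fin.cons_succ, Fin.succ_zero_eq_one]
  ring

theorem simplexPoint_cons_one_sub_sum (x : Fin (n + 2) → ℝ) (s : Fin n → ℝ) :
    simplexPoint x (Fin.cons (1 - ∑ i, s i) s) = simplexPoint (Fin.removeNth 0 x) s := by
  simp only [simplexPoint, Fin.removeNth_apply, Fin.succAbove_zero,
    Fin.sum_univ_succ (n := n), Fin.cons_zero, Fin.cons_succ, Fin.succ_zero_eq_one]
  ring

variable {E : Type*} [NormedAddCommGroup E]

theorem integrableOn_comp_simplexPoint {G : ℝ → E} (hG : Continuous G) (x : Fin (n + 1) → ℝ) :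
    IntegrableOn (fun s => G (simplexPoint x s)) (cornerSimplex (Fin n)) :=
  (hG.comp (continuous_simplexPoint x)).continuousOn.integrableOn_compact isCompact_cornerSimplex

variable [NormedSpace ℝ E]

/-- The integral `∫ G(s₀x₀ + ⋯ + sₙxₙ) dⁿs` over the standard `n`-simplex, parametrized by
`(s₁, …, sₙ)`. -/
noncomputable def hermiteIntegral (G : ℝ → E) (x : Fin (n + 1) → ℝ) : E :=
  ∫ s in cornerSimplex (Fin n), G (simplexPoint x s)

theorem hermiteIntegral_fin_one [CompleteSpace E] (G : ℝ → E) (x : Fin 1 → ℝ) :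
    hermiteIntegral G x = G (x 0) := by
  simp [hermiteIntegral, cornerSimplex, simplexPoint, Measure.real, volume_pi]

variable [CompleteSpace E] {G G' : ℝ → E}

theorem sub_smul_integral_simplexPoint_cons (hG : ∀ t, HasDerivAt G (G' t) t)
    (hG' : Continuous G') (x : Fin (n + 2) → ℝ) (s : Fin n → ℝ) :
    (x 1 - x 0) • ∫ t in (0 : ℝ)..(1 - ∑ i, s i), G' (simplexPoint x (Fin.cons t s)) =
      G (simplexPoint (Fin.removeNth 0 x) s) - G (simplexPoint (Fin.removeNth 1 x) s) := by
  simp only [← simplexPoint_cons_one_sub_sum, simplexPoint_cons]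
  rw [intervalIntegral.smul_integral_comp_mul_add, mul_zero, zero_add]
  exact intervalIntegral.integral_eq_sub_of_hasDerivAt (fun t _ => hG t)
    (hG'.intervalIntegrable _ _)

theorem sub_smul_hermiteIntegral (hG : ∀ t, HasDerivAt G (G' t) t) (hG' : Continuous G')
    (x : Fin (n + 2) → ℝ) :
    (x 1 - x 0) • hermiteIntegral G' x =
      hermiteIntegral G (Fin.removeNth 0 x) - hermiteIntegral G (Fin.removeNth 1 x) := by
  have hGc : Continuous G := continuous_iff_continuousAt.2 fun t => (hG t).continuousAt
  simp only [hermiteIntegral]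
  rw [setIntegral_cornerSimplex_succ (integrableOn_comp_simplexPoint hG' x), ← integral_smul,
    ← integral_sub (integrableOn_comp_simplexPoint hGc _) (integrableOn_comp_simplexPoint hGc _)]
  simp only [sub_smul_integral_simplexPoint_cons hG hG']

theorem hermite_representation_general {f : ℝ → E} (hf : ContDiff ℝ n f) {x : Fin (n + 1) → ℝ}
    (hx : x.Injective) :
    dividedDifference univ x f = hermiteIntegral (iteratedDeriv n f) x := by
  induction n with
  | zero => rw [dividedDifference_fin_one, hermiteIntegral_fin_one, iteratedDeriv_zero]
  | succ n ih =>
    have hfn : ContDiff ℝ n f := hf.of_le (by exact_mod_cast n.le_succ)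
    have hderiv (t : ℝ) : HasDerivAt (iteratedDeriv n f) (iteratedDeriv (n + 1) f t) t := by
      rw [iteratedDeriv_succ]
      exact (hf.differentiable_iteratedDeriv n (by exact_mod_cast n.lt_succ_self) t).hasDerivAt
    have hcont : Continuous (iteratedDeriv (n + 1) f) := hf.continuous_iteratedDeriv _ le_rfl
    have hne : x 1 - x 0 ≠ 0 := sub_ne_zero.2 (hx.ne one_ne_zero)
    refine smul_right_injective E hne ?_
    calc (x 1 - x 0) • dividedDifference univ x f
        = dividedDifference univ (Fin.removeNth 0 x) f -
            dividedDifference univ (Fin.removeNth 1 x) f :=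
          sub_smul_dividedDifference_univ hx 1 0 f
      _ = hermiteIntegral (iteratedDeriv n f) (Fin.removeNth 0 x) -
            hermiteIntegral (iteratedDeriv n f) (Fin.removeNth 1 x) := by
          rw [ih hfn (injective_removeNth hx 0), ih hfn (injective_removeNth hx 1)]
      _ = (x 1 - x 0) • hermiteIntegral (iteratedDeriv (n + 1) f) x :=
          (sub_smul_hermiteIntegral hderiv hcont x).symm

end HermiteIntegral

/-- Hermite's integral representation of the divided difference:
`f[x₀,…,xₙ] = ∫_{Δₙ} f⁽ⁿ⁾(s₀x₀ + ⋯ + sₙxₙ) dⁿs`, where the `n`-simplex is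
parametrized by `(s₁,…,sₙ)` with `s₀ = 1 - ∑ sᵢ`. -/
theorem hermite_representation (n : ℕ) (f : ℝ → ℝ) (hf : ContDiff ℝ n f)
    (x : Fin (n + 1) → ℝ) (hx : Function.Injective x) :
    divDiffRec f n x =
      ∫ s in {s : Fin n → ℝ | (∀ i, 0 ≤ s i) ∧ ∑ i, s i ≤ 1},
        iteratedDeriv n f ((1 - ∑ i, s i) * x 0 + ∑ i : Fin n, s i * x i.succ) :=
  (divDiffRec_eq_dividedDifference f hx).trans (hermite_representation_general hf hx)
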